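/- (Best low-rank approximation via SVD, Frobenius norm.) Let U be a real m×n matrix with singular value decomposition U = Σ_{i=1}^{n} d_i û_i w̃_iᵀ, where d₁ ≥ … ≥ d_n ≥ 0. Then for every r ≤ n, the truncated matrix U_r = Σ_{i=1}^{r} d_i û_i w̃_iᵀ has rank at most r, satisfies ‖U − U_r‖_F² = Σ_{i=r+1}^{n} d_i², and for every real m×n matrix B of rank at most r, ‖U − B‖_F² ≥ Σ_{i=r+1}^{n} d_i². Hence U_r is a best rank-r approximation of U in the Frobenius norm. -/

import Mathlib

open Finset

theorem ey_rank_sum {m n : ℕ} {ι : Type*} (s : Finset ι) (x : ι → Fin m → ℝ)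
    (y : ι → Fin n → ℝ) :
    (∑ i ∈ s, Matrix.vecMulVec (x i) (y i)).rank ≤ s.card := by
  have h : (∑ i ∈ s, Matrix.vecMulVec (x i) (y i)) =
      (Matrix.of fun (a : Fin m) (i : s) => x i a) * (Matrix.of fun (i : s) b => y i b) := by
    ext a b
    simp only [Matrix.sum_apply, Matrix.vecMulVec_apply, Matrix.mul_apply, Matrix.of_apply]
    exact (Finset.sum_coe_sort s (fun i => x i a * y i b)).symm
  rw [h]
  refine (Matrix.rank_mul_le_left _ _).trans ((Matrix.rank_le_card_width _).trans ?_)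
  simp

theorem ey_parseval {n : ℕ} (w : Fin n → Fin n → ℝ)
    (hw : ∀ i j : Fin n, (∑ b : Fin n, w i b * w j b) = if i = j then 1 else 0)
    (x : Fin n → ℝ) : ∑ b, x b ^ 2 = ∑ i, (∑ b, x b * w i b) ^ 2 := by
  have h1 : (Matrix.of w) * (Matrix.of w).transpose = 1 := by
    ext i j
    simp [Matrix.mul_apply, hw, Matrix.one_apply]
  have h2 : (Matrix.of w).transpose * (Matrix.of w) = 1 := mul_eq_one_comm.mp h1
  have h3 : ∀ b c, ∑ i, w i b * w i c = if b = c then 1 else 0 := by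
    intro b c
    have := congrFun (congrFun h2 b) c
    simpa [Matrix.mul_apply, Matrix.one_apply] using this
  have h4 : ∀ i, (∑ b, x b * w i b) ^ 2 = ∑ b, ∑ c, x b * x c * (w i b * w i c) := by
    intro i
    rw [sq, Finset.sum_mul_sum]
    refine Finset.sum_congr rfl fun b _ => Finset.sum_congr rfl fun c _ => by ring
  simp_rw [h4]
  rw [Finset.sum_comm]
  refine Finset.sum_congr rfl fun b _ => ?_
  rw [Finset.sum_comm]
  simp_rw [← Finset.mul_sum, h3]
  simp [sq]

theorem ey_frob {m n : ℕ} (w : Fin n → Fin n → ℝ)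
    (hw : ∀ i j : Fin n, (∑ b : Fin n, w i b * w j b) = if i = j then 1 else 0)
    (X : Fin m → Fin n → ℝ) :
    ∑ a, ∑ b, X a b ^ 2 = ∑ i, ∑ a, (∑ b, X a b * w i b) ^ 2 := by
  rw [Finset.sum_comm (s := Finset.univ (α := Fin n))]
  exact Finset.sum_congr rfl fun a _ => ey_parseval w hw (X a)

theorem ey_apply {m n : ℕ} (d : Fin n → ℝ) (u : Fin n → Fin m → ℝ) (w : Fin n → Fin n → ℝ)
    (hw : ∀ i j : Fin n, (∑ b : Fin n, w i b * w j b) = if i = j then 1 else 0)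
    (s : Finset (Fin n)) (a : Fin m) (j : Fin n) :
    ∑ b, (∑ i ∈ s, d i * u i a * w i b) * w j b = if j ∈ s then d j * u j a else 0 := by
  simp_rw [Finset.sum_mul]
  rw [Finset.sum_comm]
  simp_rw [mul_assoc, ← Finset.mul_sum, hw]
  simp

theorem ey_proj {m n : ℕ} (u : Fin n → Fin m → ℝ)
    (hu : ∀ i j : Fin n, (∑ a : Fin m, u i a * u j a) = if i = j then 1 else 0)
    (B : Matrix (Fin m) (Fin n) ℝ) :
    ∃ p : Fin n → ℝ, (∀ i, 0 ≤ p i) ∧ (∀ i, p i ≤ 1) ∧ (∑ i, p i ≤ B.rank) ∧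
      ∀ (i : Fin n) (c : ℝ) (x : Fin n → ℝ),
        c ^ 2 * (1 - p i) ≤ ∑ a, (c * u i a - B.mulVec x a) ^ 2 := by
  let L := (WithLp.linearEquiv 2 ℝ (Fin m → ℝ)).symm
  let V : Submodule ℝ (EuclideanSpace ℝ (Fin m)) :=
    (LinearMap.range B.mulVecLin).map (L : (Fin m → ℝ) →ₗ[ℝ] EuclideanSpace ℝ (Fin m))
  have hV : Module.finrank ℝ V = B.rank := LinearEquiv.finrank_map_eq L _
  let v : Fin n → EuclideanSpace ℝ (Fin m) := fun i => WithLp.toLp 2 (u i)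
  have hv : Orthonormal ℝ v := by
    rw [orthonormal_iff_ite]
    intro i j
    rw [← hu i j]
    simp [v, PiLp.inner_apply, mul_comm]
  let e := stdOrthonormalBasis ℝ V
  have hp : ∀ i, ‖V.starProjection (v i)‖ ^ 2
      = ∑ j, ‖inner ℝ (v i) (e j : EuclideanSpace ℝ (Fin m))‖ ^ 2 := by
    intro i
    have := e.sum_sq_norm_inner_right (V.orthogonalProjectionOnto (v i))
    rw [V.starProjection_apply, ← Submodule.coe_norm, ← this]
    refine Finset.sum_congr rfl fun j _ => ?_
    rw [Submodule.inner_orthogonalProjectionOnto_eq_of_mem_left, real_inner_comm]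
  have hpy : ∀ y, ‖y - V.starProjection y‖ ^ 2 = ‖y‖ ^ 2 - ‖V.starProjection y‖ ^ 2 := by
    intro y
    have h := Submodule.norm_sq_eq_add_norm_sq_starProjection y V
    rw [Submodule.starProjection_orthogonal_val] at h
    linarith
  refine ⟨fun i => ‖V.starProjection (v i)‖ ^ 2, fun i => by positivity, ?_, ?_, ?_⟩
  · intro i
    have h := hpy (v i)
    rw [hv.1 i] at h
    nlinarith [sq_nonneg ‖v i - V.starProjection (v i)‖]
  · simp_rw [hp]
    rw [Finset.sum_comm]
    calc _ ≤ ∑ j : Fin (Module.finrank ℝ V), (1 : ℝ) := by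
          refine Finset.sum_le_sum fun j _ => ?_
          have h := hv.sum_inner_products_le (e j : EuclideanSpace ℝ (Fin m)) (s := Finset.univ)
          have h1 : ‖(e j : EuclideanSpace ℝ (Fin m))‖ = 1 := e.orthonormal.1 j
          rw [h1] at h
          simpa using h
      _ = B.rank := by simp [hV]
  · intro i c x
    have hmem : L (B.mulVec x) ∈ V := ⟨B.mulVec x, ⟨x, rfl⟩, rfl⟩
    have hnorm : ∑ a, (c * u i a - B.mulVec x a) ^ 2 = ‖c • v i - L (B.mulVec x)‖ ^ 2 := by
      rw [EuclideanSpace.norm_sq_eq]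
      simp [v, L]
    have h0 : c ^ 2 * (1 - ‖V.starProjection (v i)‖ ^ 2)
        = ‖c • v i - V.starProjection (c • v i)‖ ^ 2 := by
      rw [hpy, map_smul, norm_smul, norm_smul, hv.1 i, mul_pow, mul_pow, Real.norm_eq_abs, sq_abs]
      ring
    have hle : ‖c • v i - V.starProjection (c • v i)‖ ≤ ‖c • v i - L (B.mulVec x)‖ := by
      rw [Submodule.starProjection_minimal]
      exact ciInf_le ⟨0, by rintro _ ⟨z, rfl⟩; exact norm_nonneg _⟩
        (⟨L (B.mulVec x), hmem⟩ : V)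
    simp only []
    rw [hnorm, h0]
    gcongr

/-- Eckart–Young (best low-rank approximation in the Frobenius norm): if
`U = ∑ i, d i • û i w̃ iᵀ` is a singular value decomposition (singular values
`d` nonincreasing and nonnegative, `û`, `w̃` orthonormal families), then for
every `r ≤ n` the truncation `U_r = ∑_{i<r} d i • û i w̃ iᵀ` has rank at most
`r`, satisfies `‖U − U_r‖_F² = ∑_{i≥r} d i²`, and every matrix `B` of rank at
most `r` satisfies `‖U − B‖_F² ≥ ∑_{i≥r} d i²`. -/
theorem svd_truncation_best_low_rank_approx (m n : ℕ)
    (d : Fin n → ℝ) (hd_nonneg : ∀ i, 0 ≤ d i)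
    (hd_mono : ∀ i j : Fin n, i ≤ j → d j ≤ d i)
    (u : Fin n → Fin m → ℝ) (w : Fin n → Fin n → ℝ)
    (hu : ∀ i j : Fin n, (∑ a : Fin m, u i a * u j a) = if i = j then 1 else 0)
    (hw : ∀ i j : Fin n, (∑ b : Fin n, w i b * w j b) = if i = j then 1 else 0)
    (U : Matrix (Fin m) (Fin n) ℝ)
    (hU : U = fun a b => ∑ i : Fin n, d i * u i a * w i b)
    (r : ℕ) (hr : r ≤ n)
    (Ur : Matrix (Fin m) (Fin n) ℝ)
    (hUr : Ur = fun a b =>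
      ∑ i ∈ Finset.univ.filter (fun i : Fin n => (i : ℕ) < r), d i * u i a * w i b) :
    Ur.rank ≤ r ∧
      (∑ a : Fin m, ∑ b : Fin n, (U a b - Ur a b) ^ 2) =
        (∑ i ∈ Finset.univ.filter (fun i : Fin n => r ≤ (i : ℕ)), d i ^ 2) ∧
      ∀ B : Matrix (Fin m) (Fin n) ℝ, B.rank ≤ r →
        (∑ i ∈ Finset.univ.filter (fun i : Fin n => r ≤ (i : ℕ)), d i ^ 2) ≤
          ∑ a : Fin m, ∑ b : Fin n, (U a b - B a b) ^ 2 := by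
  subst hU hUr
  have hcard : (Finset.univ.filter (fun i : Fin n => (i : ℕ) < r)).card = r := by
    rw [Fin.card_filter_val_lt]
    omega
  refine ⟨?_, ?_, ?_⟩
  · have h := ey_rank_sum (Finset.univ.filter (fun i : Fin n => (i : ℕ) < r))
      (fun i a => d i * u i a) w
    rw [hcard] at h
    refine le_of_eq_of_le (congrArg Matrix.rank ?_) h
    ext a b
    simp [Matrix.sum_apply, Matrix.vecMulVec_apply]
  · rw [ey_frob w hw]
    simp_rw [sub_mul, Finset.sum_sub_distrib, ey_apply d u w hw]
    rw [Finset.sum_filter]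
    refine Finset.sum_congr rfl fun i _ => ?_
    by_cases hi : r ≤ (i : ℕ)
    · have h1 := hu i i
      simp only [if_true] at h1
      simp only [Finset.mem_univ, Finset.mem_filter, true_and, not_lt.mpr hi, if_true, if_false,
        hi, sub_zero, mul_pow, ← Finset.mul_sum]
      simp_rw [sq (u i _)]
      rw [h1, mul_one]
    · simp [hi, not_le.mp hi]
  · intro B hB
    obtain ⟨p, hp0, hp1, hps, hp⟩ := ey_proj u hu B
    rw [ey_frob w hw]
    simp_rw [sub_mul, Finset.sum_sub_distrib, ey_apply d u w hw]
    simp only [Finset.mem_univ, if_true]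
    have hlow : ∑ i, d i ^ 2 * (1 - p i) ≤
        ∑ i, ∑ a, (d i * u i a - ∑ b, B a b * w i b) ^ 2 :=
      Finset.sum_le_sum fun i _ => hp i (d i) (w i)
    refine le_trans ?_ hlow
    have hps' : ∑ i, p i ≤ (r : ℝ) := hps.trans (by exact_mod_cast hB)
    obtain ⟨c, hc0, hc1, hc2⟩ : ∃ c : ℝ, 0 ≤ c ∧ (∀ i : Fin n, (i : ℕ) < r → c ≤ d i ^ 2) ∧
        (∀ i : Fin n, r ≤ (i : ℕ) → d i ^ 2 ≤ c) := by
      by_cases hrn : r < n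
      · refine ⟨d ⟨r, hrn⟩ ^ 2, by positivity, fun i hi => ?_, fun i hi => ?_⟩
        · exact pow_le_pow_left₀ (hd_nonneg _) (hd_mono i ⟨r, hrn⟩ (Fin.le_def.mpr hi.le)) 2
        · exact pow_le_pow_left₀ (hd_nonneg _) (hd_mono ⟨r, hrn⟩ i (Fin.le_def.mpr hi)) 2
      · exact ⟨0, le_rfl, fun i _ => by positivity, fun i hi => by omega⟩
    have hsum : ∑ i : Fin n, (if (i : ℕ) < r then (1 : ℝ) else 0) = r := by
      rw [Finset.sum_boole, hcard]
    have hkey : ∑ i : Fin n, (if r ≤ (i : ℕ) then d i ^ 2 else 0) ≤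
        ∑ i : Fin n, (d i ^ 2 * (1 - p i) + c * (p i - if (i : ℕ) < r then (1 : ℝ) else 0)) := by
      refine Finset.sum_le_sum fun i _ => ?_
      by_cases hi : r ≤ (i : ℕ)
      · rw [if_pos hi, if_neg (not_lt.mpr hi)]
        nlinarith [mul_nonneg (hp0 i) (sub_nonneg.mpr (hc2 i hi))]
      · rw [if_neg hi, if_pos (not_le.mp hi)]
        nlinarith [mul_nonneg (sub_nonneg.mpr (hp1 i)) (sub_nonneg.mpr (hc1 i (not_le.mp hi)))]
    rw [Finset.sum_add_distrib, ← Finset.mul_sum, Finset.sum_sub_distrib, hsum] at hkey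
    rw [Finset.sum_filter]
    nlinarith [mul_nonneg hc0 (sub_nonneg.mpr hps')]
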